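/- arXiv:1403.2410 — 4 statements merged into one kernel-verified Lean document; each statement's English description precedes it below -/
import Mathlib

section
/- Let Γ be an even unimodular lattice, let Λ ⊆ Γ be a primitive nondegenerate sublattice, and let Λ⊥ = {w ∈ Γ : ⟨w,v⟩ = 0 for all v ∈ Λ} be its orthogonal complement. Then there exists a group isomorphism γ : Λ*/Λ → (Λ⊥)*/Λ⊥ such that q_{Λ⊥}(γ(x)) = −q_Λ(x) in ℚ/2ℤ for every x ∈ Λ*/Λ, and, under the identification Γ⊗ℚ = (Λ⊗ℚ) ⊕ (Λ⊥⊗ℚ), one has Γ = {(v,w) ∈ Λ* ⊕ (Λ⊥)* : γ([v]) = [w]}, where [v] and [w] denote the classes of v and w in Λ*/Λ and (Λ⊥)*/Λ⊥. -/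
/-!
STATEMENT 0: Let Γ be an even unimodular lattice, Λ ⊆ Γ a primitive nondegenerate
sublattice and Λ⊥ its orthogonal complement in Γ.  Then there is a group isomorphism
γ : Λ*/Λ → (Λ⊥)*/Λ⊥ reversing the discriminant quadratic forms
(q_{Λ⊥}(γ x) = −q_Λ(x) in ℚ/2ℤ, i.e. B x x + B y y ∈ 2ℤ on representatives) and such
that Γ is the glued lattice {(v,w) ∈ Λ* ⊕ (Λ⊥)* : γ [v] = [w]}.

We realise all lattices inside an ambient rational quadratic space (V, B):
a full even unimodular lattice Γ is a finitely generated ℤ-submodule spanning V,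
with B symmetric, nondegenerate, integer-valued and even on Γ, and equal to its
dual lattice Γ* = {x ∈ spanℚ Γ : ∀ v ∈ Γ, B x v ∈ ℤ}.
-/

noncomputable section

variable {V : Type} [AddCommGroup V] [Module ℚ V]

/-- The dual lattice `L* = {x ∈ L⊗ℚ : ⟨x,v⟩ ∈ ℤ for all v ∈ L}` of a ℤ-lattice `L`
inside the rational quadratic space `(V, B)`. -/
def dualLat (B : V →ₗ[ℚ] V →ₗ[ℚ] ℚ) (L : Submodule ℤ V) : Submodule ℤ V where
  carrier := {x | x ∈ Submodule.span ℚ (L : Set V) ∧ ∀ v ∈ L, ∃ n : ℤ, B x v = (n : ℚ)}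
  zero_mem' := ⟨Submodule.zero_mem _, fun v _ => ⟨0, by simp⟩⟩
  add_mem' := by
    rintro x y ⟨hx1, hx2⟩ ⟨hy1, hy2⟩
    refine ⟨Submodule.add_mem _ hx1 hy1, fun v hv => ?_⟩
    obtain ⟨m, hm⟩ := hx2 v hv
    obtain ⟨k, hk⟩ := hy2 v hv
    exact ⟨m + k, by rw [map_add, LinearMap.add_apply, hm, hk]; push_cast; ring⟩
  smul_mem' := by
    rintro c x ⟨hx1, hx2⟩
    constructor
    · rw [← Int.cast_smul_eq_zsmul ℚ]
      exact Submodule.smul_mem _ _ hx1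
    · intro v hv
      obtain ⟨m, hm⟩ := hx2 v hv
      refine ⟨c * m, ?_⟩
      rw [← Int.cast_smul_eq_zsmul ℚ, map_smul, LinearMap.smul_apply, smul_eq_mul, hm]
      push_cast; ring

/-- The orthogonal complement `{w ∈ Γ : ⟨w,v⟩ = 0 for all v ∈ L}` of `L` in `Γ`. -/
def orthoCompl (B : V →ₗ[ℚ] V →ₗ[ℚ] ℚ) (Γ L : Submodule ℤ V) : Submodule ℤ V where
  carrier := {w | w ∈ Γ ∧ ∀ v ∈ L, B w v = 0}
  zero_mem' := ⟨Submodule.zero_mem _, fun v _ => by simp⟩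
  add_mem' := by
    rintro x y ⟨hx1, hx2⟩ ⟨hy1, hy2⟩
    exact ⟨Submodule.add_mem _ hx1 hy1, fun v hv => by
      rw [map_add, LinearMap.add_apply, hx2 v hv, hy2 v hv, add_zero]⟩
  smul_mem' := by
    rintro c x ⟨hx1, hx2⟩
    refine ⟨Submodule.smul_mem _ _ hx1, fun v hv => ?_⟩
    rw [← Int.cast_smul_eq_zsmul ℚ, map_smul, LinearMap.smul_apply, hx2 v hv, smul_zero]

/-- The discriminant group `L*/L` of a lattice `L`. -/
abbrev discGrp (B : V →ₗ[ℚ] V →ₗ[ℚ] ℚ) (L : Submodule ℤ V) :=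
  ↥(dualLat B L) ⧸ (L.comap (dualLat B L).subtype)

/-- The class `[x] ∈ L*/L` of an element `x ∈ L*`. -/
def discMk (B : V →ₗ[ℚ] V →ₗ[ℚ] ℚ) (L : Submodule ℤ V) (x : V) (hx : x ∈ dualLat B L) :
    discGrp B L :=
  Submodule.Quotient.mk ⟨x, hx⟩

theorem aux_denom (L : Submodule ℤ V) (x : V) (hx : x ∈ Submodule.span ℚ (L : Set V)) :
    ∃ n : ℤ, n ≠ 0 ∧ n • x ∈ L := by
  induction hx using Submodule.span_induction with
  | mem x h => exact ⟨1, one_ne_zero, by simpa using h⟩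
  | zero => exact ⟨1, one_ne_zero, by simp⟩
  | add x y _ _ ihx ihy =>
    obtain ⟨m, hm, hmx⟩ := ihx
    obtain ⟨n, hn, hny⟩ := ihy
    refine ⟨m * n, mul_ne_zero hm hn, ?_⟩
    rw [smul_add]
    refine L.add_mem ?_ ?_
    · rw [mul_comm, mul_smul]; exact L.smul_mem _ hmx
    · rw [mul_smul]; exact L.smul_mem _ hny
  | smul a x _ ih =>
    obtain ⟨m, hm, hmx⟩ := ih
    refine ⟨m * a.den, mul_ne_zero hm (by exact_mod_cast a.den_ne_zero), ?_⟩
    have h : (m * a.den : ℤ) • a • x = a.num • m • x := by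
      simp only [← Int.cast_smul_eq_zsmul ℚ, smul_smul]
      congr 1
      have := Rat.mul_den_eq_num a
      push_cast
      linear_combination (m : ℚ) * this
    rw [h]
    exact L.smul_mem _ hmx

/-- A rational functional on `Γ` extends to `V` and is represented by `B`. -/
theorem aux_repr [FiniteDimensional ℚ V] (B : V →ₗ[ℚ] V →ₗ[ℚ] ℚ)
    (hnondeg : ∀ x : V, (∀ y : V, B x y = 0) → x = 0)
    (φ : V →ₗ[ℚ] ℚ) : ∃ z : V, ∀ v, B z v = φ v := by
  have hinj : Function.Injective B := by
    rw [injective_iff_map_eq_zero]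
    intro a ha
    exact hnondeg a fun y => by rw [ha]; rfl
  have hs : Function.Surjective B :=
    (LinearMap.injective_iff_surjective_of_finrank_eq_finrank
      (f := B) (Subspace.dual_finrank_eq (K := ℚ) (V := V)).symm).1 hinj
  obtain ⟨z, hz⟩ := hs φ
  exact ⟨z, fun v => by rw [hz]⟩

theorem aux_extend (Γ : Submodule ℤ V) (hfg : Γ.FG)
    (hfull : Submodule.span ℚ (Γ : Set V) = ⊤) (f : Γ →ₗ[ℤ] ℚ) :
    ∃ φ : V →ₗ[ℚ] ℚ, ∀ v : Γ, φ v = f v := by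
  have : Module.Finite ℤ Γ := Module.Finite.iff_fg.2 hfg
  have : Module.IsTorsionFree ℤ V := Module.IsTorsionFree.trans_faithfulSMul ℤ ℚ V
  have : Module.Free ℤ Γ := inferInstance
  let b := Module.Free.chooseBasis ℤ Γ
  have hli : LinearIndependent ℤ (fun i => (b i : V)) :=
    b.linearIndependent.map' Γ.subtype (by simp)
  have hliQ : LinearIndependent ℚ (fun i => (b i : V)) :=
    (LinearIndependent.iff_fractionRing ℤ ℚ).1 hli
  have hb : ∀ v : Γ, (v : V) ∈ Submodule.span ℚ (Set.range fun i => (b i : V)) := by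
    intro v
    rw [← b.sum_repr v]
    push_cast
    refine Submodule.sum_mem _ fun i _ => ?_
    rw [← Int.cast_smul_eq_zsmul ℚ]
    exact Submodule.smul_mem _ _ (Submodule.subset_span ⟨i, rfl⟩)
  have hsp : ⊤ ≤ Submodule.span ℚ (Set.range fun i => (b i : V)) := by
    rw [← hfull, Submodule.span_le]
    intro v hv
    exact hb ⟨v, hv⟩
  let bQ := Module.Basis.mk hliQ hsp
  refine ⟨bQ.constr ℚ fun i => f (b i), ?_⟩
  have key : ((bQ.constr ℚ fun i => f (b i)).restrictScalars ℤ) ∘ₗ Γ.subtype = f := by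
    apply b.ext
    intro i
    have h1 : (b i : V) = bQ i := by simp [bQ]
    simp only [LinearMap.comp_apply, Submodule.subtype_apply, LinearMap.restrictScalars_apply]
    rw [h1, Module.Basis.constr_basis]
  intro v
  exact congrArg (fun g => g v) key

theorem aux_lift [FiniteDimensional ℚ V] (B : V →ₗ[ℚ] V →ₗ[ℚ] ℚ)
    (hnondeg : ∀ x : V, (∀ y : V, B x y = 0) → x = 0)
    (Γ : Submodule ℤ V) (hfg : Γ.FG)
    (hfull : Submodule.span ℚ (Γ : Set V) = ⊤)
    (hunimod : dualLat B Γ = Γ)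
    (L : Submodule ℤ V)
    (hprim : ∀ (c : ℤ) (x : V), x ∈ Γ → c ≠ 0 → c • x ∈ L → x ∈ L)
    (x : V) (hx : ∀ v ∈ L, ∃ n : ℤ, B x v = (n : ℚ)) :
    ∃ z ∈ Γ, ∀ v ∈ Γ, v ∈ L → B z v = B x v := by
  have : Module.Finite ℤ Γ := Module.Finite.iff_fg.2 hfg
  let L' : Submodule ℤ Γ := L.comap Γ.subtype
  have htf : Module.IsTorsionFree ℤ (Γ ⧸ L') := by
    rw [Module.isTorsionFree_iff_smul_eq_zero]
    intro c q hq
    obtain ⟨q, rfl⟩ := Submodule.Quotient.mk_surjective _ q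
    by_cases hc : c = 0
    · exact Or.inl hc
    right
    rw [← Submodule.Quotient.mk_smul, Submodule.Quotient.mk_eq_zero] at hq
    rw [Submodule.Quotient.mk_eq_zero]
    exact hprim c q q.2 hc hq
  have : Module.Free ℤ (Γ ⧸ L') := inferInstance
  obtain ⟨s, hs⟩ := Module.projective_lifting_property L'.mkQ LinearMap.id
    (Submodule.mkQ_surjective L')
  have hs' : ∀ q, L'.mkQ (s q) = q := fun q => congrArg (fun g => g q) hs
  let p : Γ →ₗ[ℤ] Γ := LinearMap.id - s ∘ₗ L'.mkQ
  have hp : ∀ v, (p v : V) ∈ L := by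
    intro v
    have : p v ∈ L' := by
      rw [← Submodule.ker_mkQ L', LinearMap.mem_ker]
      simp only [p, LinearMap.sub_apply, LinearMap.comp_apply, map_sub, hs', LinearMap.id_apply,
        sub_self]
    exact this
  have hpL : ∀ v : Γ, (v : V) ∈ L → p v = v := by
    intro v hv
    have : L'.mkQ v = 0 := by
      rw [← LinearMap.mem_ker, Submodule.ker_mkQ]; exact hv
    simp [p, -Submodule.mkQ_apply, this]
  obtain ⟨φ, hφ⟩ := aux_extend Γ hfg hfull
    (((B x).restrictScalars ℤ) ∘ₗ Γ.subtype ∘ₗ p)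
  obtain ⟨z, hz⟩ := aux_repr B hnondeg φ
  have hzv : ∀ v : Γ, B z v = B x (p v) := fun v => by rw [hz, hφ]; rfl
  refine ⟨z, ?_, ?_⟩
  · rw [← hunimod]
    refine ⟨by rw [hfull]; trivial, fun v hv => ?_⟩
    rw [hzv ⟨v, hv⟩]
    exact hx _ (hp _)
  · intro v hv hvL
    rw [hzv ⟨v, hv⟩, hpL _ hvL]

theorem aux_perp_span (B : V →ₗ[ℚ] V →ₗ[ℚ] ℚ) (L : Submodule ℤ V) (x : V)
    (h : ∀ v ∈ L, B x v = 0) : ∀ v ∈ Submodule.span ℚ (L : Set V), B x v = 0 := by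
  intro v hv
  have : Submodule.span ℚ (L : Set V) ≤ LinearMap.ker (B x) :=
    Submodule.span_le.2 fun v hv => h v hv
  exact this hv

theorem aux_proj [FiniteDimensional ℚ V] (B : V →ₗ[ℚ] V →ₗ[ℚ] ℚ) (W : Submodule ℚ V)
    (h : ∀ x ∈ W, (∀ v ∈ W, B x v = 0) → x = 0) :
    ∃ π : V →ₗ[ℚ] V, (∀ z, π z ∈ W) ∧ ∀ z, ∀ w ∈ W, B (π z) w = B z w := by
  let R : V →ₗ[ℚ] Module.Dual ℚ W := (Module.Dual.transpose W.subtype) ∘ₗ B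
  have hR : ∀ z (w : W), R z w = B z w := fun z w => rfl
  let e : W →ₗ[ℚ] Module.Dual ℚ W := R ∘ₗ W.subtype
  have hinj : Function.Injective e := by
    rw [injective_iff_map_eq_zero]
    intro a ha
    apply Subtype.ext
    refine h a a.2 fun v hv => ?_
    have := congrArg (fun g => g ⟨v, hv⟩) ha
    exact this
  let E := LinearEquiv.ofInjectiveOfFinrankEq e hinj
    (Subspace.dual_finrank_eq (K := ℚ) (V := W)).symm
  refine ⟨W.subtype ∘ₗ E.symm.toLinearMap ∘ₗ R, fun z => (E.symm (R z)).2, fun z w hw => ?_⟩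
  have : E (E.symm (R z)) = R z := E.apply_symm_apply _
  have := congrArg (fun g => g ⟨w, hw⟩) this
  exact this

theorem statement0
    (B : V →ₗ[ℚ] V →ₗ[ℚ] ℚ)
    (hsymm : ∀ x y, B x y = B y x)
    (hnondeg : ∀ x : V, (∀ y : V, B x y = 0) → x = 0)
    (Γ : Submodule ℤ V)
    (hfg : Γ.FG)
    (hfull : Submodule.span ℚ (Γ : Set V) = ⊤)
    (hint : ∀ v ∈ Γ, ∀ w ∈ Γ, ∃ n : ℤ, B v w = (n : ℚ))
    (heven : ∀ v ∈ Γ, ∃ n : ℤ, B v v = 2 * (n : ℚ))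
    (hunimod : dualLat B Γ = Γ)
    (Λ : Submodule ℤ V)
    (hsub : Λ ≤ Γ)
    (hprim : ∀ (c : ℤ) (x : V), x ∈ Γ → c ≠ 0 → c • x ∈ Λ → x ∈ Λ)
    (hΛnondeg : ∀ x ∈ Submodule.span ℚ (Λ : Set V), (∀ v ∈ Λ, B x v = 0) → x = 0) :
    ∃ γ : discGrp B Λ ≃+ discGrp B (orthoCompl B Γ Λ),
      (∀ (x : V) (hx : x ∈ dualLat B Λ) (y : V) (hy : y ∈ dualLat B (orthoCompl B Γ Λ)),
        γ (discMk B Λ x hx) = discMk B (orthoCompl B Γ Λ) y hy →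
          ∃ n : ℤ, B x x + B y y = 2 * (n : ℚ)) ∧
      (∀ z : V, z ∈ Γ ↔
        ∃ (x : V) (hx : x ∈ dualLat B Λ) (y : V) (hy : y ∈ dualLat B (orthoCompl B Γ Λ)),
          z = x + y ∧
          γ (discMk B Λ x hx) = discMk B (orthoCompl B Γ Λ) y hy) := by
  classical
  have hfin : FiniteDimensional ℚ V := by
    obtain ⟨S, hS⟩ := hfg
    refine ⟨⟨S, ?_⟩⟩
    rw [eq_top_iff, ← hfull, Submodule.span_le, ← hS]
    exact Submodule.span_le_restrictScalars ℤ ℚ (S : Set V)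
  obtain ⟨π, hπW, hπB⟩ := aux_proj B (Submodule.span ℚ (Λ : Set V)) (fun x hx h =>
    hΛnondeg x hx fun v hv => h v (Submodule.subset_span hv))
  set M := orthoCompl B Γ Λ with hM
  have hMΓ : M ≤ Γ := fun x hx => hx.1
  -- uniqueness of the projection
  have hπu : ∀ x ∈ Submodule.span ℚ (Λ : Set V), ∀ z, (∀ v ∈ Λ, B x v = B z v) → π z = x := by
    intro x hx z h
    rw [← sub_eq_zero]
    refine hΛnondeg _ (Submodule.sub_mem _ (hπW z) hx) fun v hv => ?_
    rw [map_sub, LinearMap.sub_apply, hπB z v (Submodule.subset_span hv), h v hv, sub_self]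
  -- the rational orthogonal complement is spanned by `M`
  have hspanM : ∀ y, (∀ v ∈ Λ, B y v = 0) → y ∈ Submodule.span ℚ (M : Set V) := by
    intro y hy
    obtain ⟨n, hn, hny⟩ := aux_denom Γ y (by rw [hfull]; trivial)
    have h1 : n • y ∈ M := ⟨hny, fun v hv => by
      rw [← Int.cast_smul_eq_zsmul ℚ, map_smul, LinearMap.smul_apply, hy v hv, smul_zero]⟩
    have hq : (n : ℚ) ≠ 0 := by exact_mod_cast hn
    have h2 : y = (n : ℚ)⁻¹ • (n • y) := by
      rw [← Int.cast_smul_eq_zsmul ℚ, smul_smul, inv_mul_cancel₀ hq, one_smul]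
    rw [h2]
    exact Submodule.smul_mem _ _ (Submodule.subset_span h1)
  have hMperp : ∀ y ∈ Submodule.span ℚ (M : Set V), ∀ w ∈ Submodule.span ℚ (Λ : Set V),
      B w y = 0 := by
    intro y hy w hw
    refine aux_perp_span B M w (fun m hm => ?_) y hy
    rw [hsymm]
    exact aux_perp_span B Λ m hm.2 w hw
  have hπM : ∀ y ∈ Submodule.span ℚ (M : Set V), π y = 0 := by
    intro y hy
    refine hπu 0 (Submodule.zero_mem _) y fun v hv => ?_
    rw [hsymm y, hMperp y hy v (Submodule.subset_span hv)]
    simp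
  have hperp : ∀ z, ∀ v ∈ Λ, B (z - π z) v = 0 := by
    intro z v hv
    rw [map_sub, LinearMap.sub_apply, hπB z v (Submodule.subset_span hv), sub_self]
  have hΓW : ∀ x ∈ Γ, x ∈ Submodule.span ℚ (Λ : Set V) → x ∈ Λ := by
    intro x hx hxW
    obtain ⟨n, hn, hnx⟩ := aux_denom Λ x hxW
    exact hprim n x hx hn hnx
  have hMprim : ∀ (c : ℤ) (x : V), x ∈ Γ → c ≠ 0 → c • x ∈ M → x ∈ M := by
    intro c x hx hc hcx
    refine ⟨hx, fun v hv => ?_⟩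
    have := hcx.2 v hv
    rw [← Int.cast_smul_eq_zsmul ℚ, map_smul, LinearMap.smul_apply, smul_eq_mul] at this
    exact (mul_eq_zero.1 this).resolve_left (by exact_mod_cast hc)
  have hd1 : ∀ z ∈ Γ, π z ∈ dualLat B Λ := by
    intro z hz
    refine ⟨hπW z, fun v hv => ?_⟩
    rw [hπB z v (Submodule.subset_span hv)]
    exact hint z hz v (hsub hv)
  have hd2 : ∀ z ∈ Γ, z - π z ∈ dualLat B M := by
    intro z hz
    refine ⟨hspanM _ (hperp z), fun v hv => ?_⟩
    rw [map_sub, LinearMap.sub_apply, hMperp v (Submodule.subset_span hv) _ (hπW z), sub_zero]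
    exact hint z hz v (hMΓ hv)
  let f0 : Γ →ₗ[ℤ] dualLat B Λ :=
    LinearMap.codRestrict _ ((π.restrictScalars ℤ) ∘ₗ Γ.subtype) (fun z => hd1 z z.2)
  let g0 : Γ →ₗ[ℤ] dualLat B M :=
    LinearMap.codRestrict _ (((LinearMap.id - π).restrictScalars ℤ) ∘ₗ Γ.subtype)
      (fun z => hd2 z z.2)
  let f : Γ →ₗ[ℤ] discGrp B Λ := (Λ.comap (dualLat B Λ).subtype).mkQ ∘ₗ f0
  let g : Γ →ₗ[ℤ] discGrp B M := (M.comap (dualLat B M).subtype).mkQ ∘ₗ g0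
  have hfdef : ∀ z : Γ, f z = discMk B Λ (π z) (hd1 z z.2) := fun z => rfl
  have hgdef : ∀ z : Γ, g z = discMk B M (z - π z) (hd2 z z.2) := fun z => rfl
  have hmk : ∀ (L : Submodule ℤ V) x hx y hy,
      discMk B L x hx = discMk B L y hy ↔ x - y ∈ L := by
    intro L x hx y hy
    unfold discMk
    rw [Submodule.Quotient.eq]
    rfl
  have hmk0 : ∀ (L : Submodule ℤ V) x hx, discMk B L x hx = 0 ↔ x ∈ L := by
    intro L x hx
    unfold discMk
    rw [Submodule.Quotient.mk_eq_zero]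
    rfl
  have hfs : Function.Surjective f := by
    intro q
    obtain ⟨⟨x, hx⟩, rfl⟩ := Submodule.Quotient.mk_surjective _ q
    obtain ⟨z, hz, hzx⟩ := aux_lift B hnondeg Γ hfg hfull hunimod Λ hprim x hx.2
    refine ⟨⟨z, hz⟩, ?_⟩
    have : π z = x := hπu x hx.1 z fun v hv => (hzx v (hsub hv) hv).symm
    rw [hfdef]
    refine (hmk Λ _ _ x hx).2 ?_
    simp [this]
  have hgs : Function.Surjective g := by
    intro q
    obtain ⟨⟨y, hy⟩, rfl⟩ := Submodule.Quotient.mk_surjective _ q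
    obtain ⟨z, hz, hzy⟩ := aux_lift B hnondeg Γ hfg hfull hunimod M hMprim y hy.2
    refine ⟨⟨z, hz⟩, ?_⟩
    have h1 : z - π z - y = 0 := by
      have e1 : ∀ v ∈ Λ, B (z - π z - y) v = 0 := by
        intro v hv
        rw [map_sub, LinearMap.sub_apply, hperp z v hv, hsymm y,
          hMperp y hy.1 v (Submodule.subset_span hv), sub_zero]
      have e2 : ∀ v ∈ M, B (z - π z - y) v = 0 := by
        intro v hv
        rw [map_sub, LinearMap.sub_apply, map_sub, LinearMap.sub_apply,
          hMperp v (Submodule.subset_span hv) _ (hπW z), hzy v (hMΓ hv) hv]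
        ring
      refine hnondeg _ fun v => ?_
      have : v = π v + (v - π v) := by abel
      rw [this, map_add, aux_perp_span B Λ _ e1 _ (hπW v),
        aux_perp_span B M _ e2 _ (hspanM _ (hperp v)), add_zero]
    rw [hgdef]
    refine (hmk M _ _ y hy).2 ?_
    simp [h1]
  have hker : LinearMap.ker f = LinearMap.ker g := by
    ext z
    rw [LinearMap.mem_ker, LinearMap.mem_ker, hfdef, hgdef, hmk0, hmk0]
    constructor
    · intro h
      exact ⟨Γ.sub_mem z.2 (hsub h), hperp z⟩
    · intro h
      refine hΓW _ ?_ (hπW _)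
      have := Γ.sub_mem z.2 (hMΓ h)
      simpa using this
  let γ : discGrp B Λ ≃ₗ[ℤ] discGrp B M :=
    (f.quotKerEquivOfSurjective hfs).symm ≪≫ₗ
      (Submodule.quotEquivOfEq _ _ hker) ≪≫ₗ (g.quotKerEquivOfSurjective hgs)
  have hγ : ∀ z : Γ, γ (f z) = g z := by
    intro z
    have : (f.quotKerEquivOfSurjective hfs).symm (f z) = Submodule.Quotient.mk z := by
      rw [LinearEquiv.symm_apply_eq]; rfl
    simp only [γ, LinearEquiv.trans_apply]
    rw [this]
    rfl
  have hiff : ∀ (x : V) (hx : x ∈ dualLat B Λ) (y : V) (hy : y ∈ dualLat B M),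
      γ (discMk B Λ x hx) = discMk B M y hy ↔ x + y ∈ Γ := by
    intro x hx y hy
    constructor
    · intro h
      obtain ⟨z, hz⟩ := hfs (discMk B Λ x hx)
      rw [← hz, hγ, hgdef, hmk] at h
      rw [hfdef, hmk] at hz
      have h2 := Γ.sub_mem z.2 (Γ.add_mem (hsub hz) (hMΓ h))
      have h3 : (z : V) - (π z - x + (z - π z - y)) = x + y := by abel
      rwa [h3] at h2
    · intro h
      have hp : π (x + y) = x := by
        refine hπu x hx.1 _ fun v hv => ?_
        rw [map_add, LinearMap.add_apply, hsymm y,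
          hMperp y hy.1 v (Submodule.subset_span hv), add_zero]
      have e1 : f ⟨x + y, h⟩ = discMk B Λ x hx := by
        rw [hfdef, hmk]; simp only [hp, sub_self]; exact Λ.zero_mem
      have e2 : g ⟨x + y, h⟩ = discMk B M y hy := by
        rw [hgdef, hmk]; simp only [hp, add_sub_cancel_left, sub_self]; exact M.zero_mem
      rw [← e1, hγ, e2]
  refine ⟨γ.toAddEquiv, ?_, ?_⟩
  · intro x hx y hy h
    have hxy := (hiff x hx y hy).1 h
    obtain ⟨n, hn⟩ := heven _ hxy
    refine ⟨n, ?_⟩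
    rw [← hn, map_add, map_add, LinearMap.add_apply, LinearMap.add_apply, hsymm y x,
      hMperp y hy.1 x hx.1]
    ring
  · intro z
    constructor
    · intro hz
      refine ⟨π z, hd1 z hz, z - π z, hd2 z hz, by abel, ?_⟩
      refine (hiff _ _ _ _).2 ?_
      simpa using hz
    · rintro ⟨x, hx, y, hy, rfl, h⟩
      exact (hiff x hx y hy).1 h

end
end

section
/- Let Λ and K be even nondegenerate lattices and let γ : Λ*/Λ → K*/K be a group isomorphism such that q_K(γ(x)) = −q_Λ(x) in ℚ/2ℤ for all x ∈ Λ*/Λ. Then the lattice Γ := {(v,w) ∈ Λ* ⊕ K* : γ([v]) = [w]}, equipped with the orthogonal direct sum bilinear form ⟨(v,w),(v′,w′)⟩ = ⟨v,v′⟩ + ⟨w,w′⟩, is an even unimodular lattice containing Λ ⊕ K. -/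
/-!
STATEMENT 1: Let Λ and K be even nondegenerate lattices and γ : Λ*/Λ → K*/K a group
isomorphism inverting the discriminant forms (q_K(γ x) = −q_Λ(x) in ℚ/2ℤ, i.e.
B₁ x x + B₂ y y ∈ 2ℤ on representatives).  Then the glued lattice
Γ = {(v,w) ∈ Λ* ⊕ K* : γ [v] = [w]}, with the orthogonal direct sum form, is an even
unimodular lattice containing Λ ⊕ K.

Λ and K are realised as full lattices in rational quadratic spaces (V, B₁) and (W, B₂).
-/

noncomputable section

variable {V : Type} [AddCommGroup V] [Module ℚ V]

variable {W : Type} [AddCommGroup W] [Module ℚ W]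

/-- The orthogonal direct sum bilinear form `⟨(v,w),(v',w')⟩ = ⟨v,v'⟩ + ⟨w,w'⟩` on `V × W`. -/
def prodForm (B₁ : V →ₗ[ℚ] V →ₗ[ℚ] ℚ) (B₂ : W →ₗ[ℚ] W →ₗ[ℚ] ℚ) :
    (V × W) →ₗ[ℚ] (V × W) →ₗ[ℚ] ℚ :=
  LinearMap.mk₂ ℚ (fun z z' => B₁ z.1 z'.1 + B₂ z.2 z'.2)
    (fun x y z => by simp [map_add]; ring)
    (fun c x z => by simp [map_smul]; ring)
    (fun x y z => by simp [map_add]; ring)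
    (fun c x y => by simp [map_smul]; ring)

/-- The glued lattice `Γ = {(v,w) ∈ Λ* ⊕ K* : γ [v] = [w]}`. -/
def glued (B₁ : V →ₗ[ℚ] V →ₗ[ℚ] ℚ) (B₂ : W →ₗ[ℚ] W →ₗ[ℚ] ℚ)
    (L₁ : Submodule ℤ V) (L₂ : Submodule ℤ W)
    (γ : discGrp B₁ L₁ ≃+ discGrp B₂ L₂) : Submodule ℤ (V × W) where
  carrier := {z | ∃ (h₁ : z.1 ∈ dualLat B₁ L₁) (h₂ : z.2 ∈ dualLat B₂ L₂),
      γ (discMk B₁ L₁ z.1 h₁) = discMk B₂ L₂ z.2 h₂}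
  zero_mem' := by
    refine ⟨Submodule.zero_mem _, Submodule.zero_mem _, ?_⟩
    have e₁ : discMk B₁ L₁ (0 : V × W).1 (Submodule.zero_mem _) = 0 := by
      show Submodule.Quotient.mk _ = _
      rw [show (⟨(0 : V × W).1, Submodule.zero_mem _⟩ : ↥(dualLat B₁ L₁)) = 0 from
        Subtype.ext rfl]
      exact Submodule.Quotient.mk_zero _
    have e₂ : discMk B₂ L₂ (0 : V × W).2 (Submodule.zero_mem _) = 0 := by
      show Submodule.Quotient.mk _ = _
      rw [show (⟨(0 : V × W).2, Submodule.zero_mem _⟩ : ↥(dualLat B₂ L₂)) = 0 from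
        Subtype.ext rfl]
      exact Submodule.Quotient.mk_zero _
    rw [e₁, e₂, map_zero]
  add_mem' := by
    rintro x y ⟨hx1, hx2, hxγ⟩ ⟨hy1, hy2, hyγ⟩
    refine ⟨Submodule.add_mem _ hx1 hy1, Submodule.add_mem _ hx2 hy2, ?_⟩
    have e₁ : discMk B₁ L₁ (x + y).1 (Submodule.add_mem _ hx1 hy1) =
        discMk B₁ L₁ x.1 hx1 + discMk B₁ L₁ y.1 hy1 := by
      show Submodule.Quotient.mk _ = _
      rw [show (⟨(x + y).1, _⟩ : ↥(dualLat B₁ L₁)) = ⟨x.1, hx1⟩ + ⟨y.1, hy1⟩ from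
        Subtype.ext rfl]
      exact Submodule.Quotient.mk_add _
    have e₂ : discMk B₂ L₂ (x + y).2 (Submodule.add_mem _ hx2 hy2) =
        discMk B₂ L₂ x.2 hx2 + discMk B₂ L₂ y.2 hy2 := by
      show Submodule.Quotient.mk _ = _
      rw [show (⟨(x + y).2, _⟩ : ↥(dualLat B₂ L₂)) = ⟨x.2, hx2⟩ + ⟨y.2, hy2⟩ from
        Subtype.ext rfl]
      exact Submodule.Quotient.mk_add _
    rw [e₁, e₂, map_add, hxγ, hyγ]
  smul_mem' := by
    rintro c x ⟨hx1, hx2, hxγ⟩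
    refine ⟨Submodule.smul_mem _ _ hx1, Submodule.smul_mem _ _ hx2, ?_⟩
    have e₁ : discMk B₁ L₁ (c • x).1 (Submodule.smul_mem _ _ hx1) =
        c • discMk B₁ L₁ x.1 hx1 := by
      show Submodule.Quotient.mk _ = _
      rw [show (⟨(c • x).1, _⟩ : ↥(dualLat B₁ L₁)) = c • (⟨x.1, hx1⟩ : ↥(dualLat B₁ L₁)) from
        Subtype.ext rfl]
      exact Submodule.Quotient.mk_smul _ _ _
    have e₂ : discMk B₂ L₂ (c • x).2 (Submodule.smul_mem _ _ hx2) =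
        c • discMk B₂ L₂ x.2 hx2 := by
      show Submodule.Quotient.mk _ = _
      rw [show (⟨(c • x).2, _⟩ : ↥(dualLat B₂ L₂)) = c • (⟨x.2, hx2⟩ : ↥(dualLat B₂ L₂)) from
        Subtype.ext rfl]
      exact Submodule.Quotient.mk_smul _ _ _
    rw [e₁, e₂, map_zsmul, hxγ]

/-- A full finitely generated lattice has a `ℚ`-basis of the ambient space as `ℤ`-basis. -/
theorem aux_exists_basis (L : Submodule ℤ V) (hfg : L.FG)
    (hfull : Submodule.span ℚ (L : Set V) = ⊤) :
    ∃ (n : ℕ) (b : Module.Basis (Fin n) ℚ V), Submodule.span ℤ (Set.range b) = L := by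
  haveI : Module.Finite ℤ L := Module.Finite.iff_fg.mpr hfg
  haveI : Module.IsTorsionFree ℤ V := Module.IsTorsionFree.trans_faithfulSMul ℤ ℚ V
  haveI : Module.Free ℤ L := inferInstance
  let c := Module.finBasis ℤ L
  have hspan : Submodule.span ℤ (Set.range (fun i => (c i : V))) = L := by
    have : Set.range (fun i => (c i : V)) = L.subtype '' Set.range c := by
      rw [← Set.range_comp]; rfl
    rw [this, Submodule.span_image, c.span_eq, Submodule.map_top, Submodule.range_subtype]
  have hli : LinearIndependent ℚ (fun i => (c i : V)) := by
    rw [← LinearIndependent.iff_fractionRing ℤ ℚ]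
    exact c.linearIndependent.map' L.subtype (Submodule.ker_subtype L)
  have htop : ⊤ ≤ Submodule.span ℚ (Set.range (fun i => (c i : V))) := by
    rw [← hfull, Submodule.span_le]
    intro x hx
    have hx' : x ∈ L := hx
    rw [← hspan] at hx'
    exact Submodule.span_subset_span ℤ ℚ _ hx'
  refine ⟨_, Module.Basis.mk hli htop, ?_⟩
  rw [Module.Basis.coe_mk]
  exact hspan

theorem aux_dual_eq (B : V →ₗ[ℚ] V →ₗ[ℚ] ℚ) (L : Submodule ℤ V)
    (hfull : Submodule.span ℚ (L : Set V) = ⊤) :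
    dualLat B L = LinearMap.BilinForm.dualSubmodule B L := by
  ext x
  rw [LinearMap.BilinForm.mem_dualSubmodule]
  constructor
  · rintro ⟨_, h⟩ y hy
    obtain ⟨n, hn⟩ := h y hy
    exact Submodule.mem_one.mpr ⟨n, by simp [hn]⟩
  · intro h
    refine ⟨by rw [hfull]; trivial, fun y hy => ?_⟩
    obtain ⟨n, hn⟩ := Submodule.mem_one.mp (h y hy)
    exact ⟨n, by simp [← hn]⟩

theorem aux_nondeg (B : V →ₗ[ℚ] V →ₗ[ℚ] ℚ) (hsymm : ∀ x y, B x y = B y x)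
    (hnd : ∀ x : V, (∀ y : V, B x y = 0) → x = 0) : LinearMap.BilinForm.Nondegenerate B :=
  ⟨hnd, fun y hy => hnd y fun x => by rw [hsymm]; exact hy x⟩

theorem aux_dual_fg (B : V →ₗ[ℚ] V →ₗ[ℚ] ℚ) (hsymm : ∀ x y, B x y = B y x)
    (hnd : ∀ x : V, (∀ y : V, B x y = 0) → x = 0) (L : Submodule ℤ V) (hfg : L.FG)
    (hfull : Submodule.span ℚ (L : Set V) = ⊤) : (dualLat B L).FG := by
  obtain ⟨n, b, hb⟩ := aux_exists_basis L hfg hfull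
  rw [aux_dual_eq B L hfull, ← hb,
    LinearMap.BilinForm.dualSubmodule_span_of_basis B (aux_nondeg B hsymm hnd)]
  exact Submodule.fg_span (Set.finite_range _)

theorem aux_double_dual (B : V →ₗ[ℚ] V →ₗ[ℚ] ℚ) (hsymm : ∀ x y, B x y = B y x)
    (hnd : ∀ x : V, (∀ y : V, B x y = 0) → x = 0) (L : Submodule ℤ V) (hfg : L.FG)
    (hfull : Submodule.span ℚ (L : Set V) = ⊤) (x : V)
    (hx : ∀ y ∈ dualLat B L, ∃ n : ℤ, B x y = (n : ℚ)) : x ∈ L := by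
  obtain ⟨n, b, hb⟩ := aux_exists_basis L hfg hfull
  have h := LinearMap.BilinForm.dualSubmodule_dualSubmodule_of_basis (R := ℤ) (B := B)
    (aux_nondeg B hsymm hnd) ⟨hsymm⟩ b
  rw [hb] at h
  rw [← h, LinearMap.BilinForm.mem_dualSubmodule]
  intro y hy
  rw [← aux_dual_eq B L hfull] at hy
  obtain ⟨n, hn⟩ := hx y hy
  exact Submodule.mem_one.mpr ⟨n, by simp [hn]⟩

theorem aux_le_dual (B : V →ₗ[ℚ] V →ₗ[ℚ] ℚ) (L : Submodule ℤ V)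
    (hint : ∀ v ∈ L, ∀ w ∈ L, ∃ n : ℤ, B v w = (n : ℚ)) : L ≤ dualLat B L :=
  fun v hv => ⟨Submodule.subset_span hv, hint v hv⟩

theorem aux_mk_eq (B : V →ₗ[ℚ] V →ₗ[ℚ] ℚ) (L : Submodule ℤ V) (x y : V)
    (hx : x ∈ dualLat B L) (hy : y ∈ dualLat B L) :
    discMk B L x hx = discMk B L y hy ↔ x - y ∈ L :=
  Submodule.Quotient.eq _

theorem aux_mk_eq_zero (B : V →ₗ[ℚ] V →ₗ[ℚ] ℚ) (L : Submodule ℤ V) (x : V)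
    (hx : x ∈ dualLat B L) (h : x ∈ L) : discMk B L x hx = 0 :=
  (Submodule.Quotient.mk_eq_zero _).mpr h

theorem aux_mk_surj (B : V →ₗ[ℚ] V →ₗ[ℚ] ℚ) (L : Submodule ℤ V) (c : discGrp B L) :
    ∃ (x : V) (hx : x ∈ dualLat B L), discMk B L x hx = c := by
  obtain ⟨⟨x, hx⟩, h⟩ := Submodule.Quotient.mk_surjective _ c
  exact ⟨x, hx, h⟩

theorem aux_prodForm (B₁ : V →ₗ[ℚ] V →ₗ[ℚ] ℚ) (B₂ : W →ₗ[ℚ] W →ₗ[ℚ] ℚ) (z z' : V × W) :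
    prodForm B₁ B₂ z z' = B₁ z.1 z'.1 + B₂ z.2 z'.2 := rfl

theorem statement1
    (B₁ : V →ₗ[ℚ] V →ₗ[ℚ] ℚ) (B₂ : W →ₗ[ℚ] W →ₗ[ℚ] ℚ)
    (hsymm₁ : ∀ x y, B₁ x y = B₁ y x) (hsymm₂ : ∀ x y, B₂ x y = B₂ y x)
    (hnd₁ : ∀ x : V, (∀ y : V, B₁ x y = 0) → x = 0)
    (hnd₂ : ∀ x : W, (∀ y : W, B₂ x y = 0) → x = 0)
    (L₁ : Submodule ℤ V) (L₂ : Submodule ℤ W)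
    (hfg₁ : L₁.FG) (hfg₂ : L₂.FG)
    (hfull₁ : Submodule.span ℚ (L₁ : Set V) = ⊤)
    (hfull₂ : Submodule.span ℚ (L₂ : Set W) = ⊤)
    (hint₁ : ∀ v ∈ L₁, ∀ w ∈ L₁, ∃ n : ℤ, B₁ v w = (n : ℚ))
    (hint₂ : ∀ v ∈ L₂, ∀ w ∈ L₂, ∃ n : ℤ, B₂ v w = (n : ℚ))
    (heven₁ : ∀ v ∈ L₁, ∃ n : ℤ, B₁ v v = 2 * (n : ℚ))
    (heven₂ : ∀ v ∈ L₂, ∃ n : ℤ, B₂ v v = 2 * (n : ℚ))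
    (γ : discGrp B₁ L₁ ≃+ discGrp B₂ L₂)
    (hγ : ∀ (x : V) (hx : x ∈ dualLat B₁ L₁) (y : W) (hy : y ∈ dualLat B₂ L₂),
      γ (discMk B₁ L₁ x hx) = discMk B₂ L₂ y hy →
        ∃ n : ℤ, B₁ x x + B₂ y y = 2 * (n : ℚ)) :
    -- Γ is a (full, finitely generated) lattice in V × W …
    Submodule.span ℚ ((glued B₁ B₂ L₁ L₂ γ : Submodule ℤ (V × W)) : Set (V × W)) = ⊤ ∧
    (glued B₁ B₂ L₁ L₂ γ).FG ∧
    -- … which is even, …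
    (∀ z ∈ glued B₁ B₂ L₁ L₂ γ, ∃ n : ℤ, prodForm B₁ B₂ z z = 2 * (n : ℚ)) ∧
    -- … unimodular (self-dual), …
    dualLat (prodForm B₁ B₂) (glued B₁ B₂ L₁ L₂ γ) = glued B₁ B₂ L₁ L₂ γ ∧
    -- … and contains Λ ⊕ K.
    (∀ v ∈ L₁, ∀ w ∈ L₂, (v, w) ∈ glued B₁ B₂ L₁ L₂ γ) := by
  have hcont : ∀ v ∈ L₁, ∀ w ∈ L₂, (v, w) ∈ glued B₁ B₂ L₁ L₂ γ := by
    intro v hv w hw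
    refine ⟨aux_le_dual B₁ L₁ hint₁ hv, aux_le_dual B₂ L₂ hint₂ hw, ?_⟩
    rw [aux_mk_eq_zero B₁ L₁ _ _ hv, aux_mk_eq_zero B₂ L₂ _ _ hw, map_zero]
  have heven : ∀ z ∈ glued B₁ B₂ L₁ L₂ γ, ∃ n : ℤ, prodForm B₁ B₂ z z = 2 * (n : ℚ) := by
    rintro z ⟨h₁, h₂, h⟩
    exact hγ _ h₁ _ h₂ h
  have hspan : Submodule.span ℚ
      ((glued B₁ B₂ L₁ L₂ γ : Submodule ℤ (V × W)) : Set (V × W)) = ⊤ := by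
    rw [eq_top_iff]
    rintro ⟨x, y⟩ -
    have hx : x ∈ Submodule.comap (LinearMap.inl ℚ V W) (Submodule.span ℚ
        ((glued B₁ B₂ L₁ L₂ γ : Submodule ℤ (V × W)) : Set (V × W))) := by
      have : Submodule.span ℚ (L₁ : Set V) ≤ Submodule.comap (LinearMap.inl ℚ V W)
          (Submodule.span ℚ ((glued B₁ B₂ L₁ L₂ γ : Submodule ℤ (V × W)) : Set (V × W))) :=
        Submodule.span_le.mpr fun v hv =>
          Submodule.subset_span (hcont v hv 0 (Submodule.zero_mem _))
      exact this (by rw [hfull₁]; trivial)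
    have hy : y ∈ Submodule.comap (LinearMap.inr ℚ V W) (Submodule.span ℚ
        ((glued B₁ B₂ L₁ L₂ γ : Submodule ℤ (V × W)) : Set (V × W))) := by
      have : Submodule.span ℚ (L₂ : Set W) ≤ Submodule.comap (LinearMap.inr ℚ V W)
          (Submodule.span ℚ ((glued B₁ B₂ L₁ L₂ γ : Submodule ℤ (V × W)) : Set (V × W))) :=
        Submodule.span_le.mpr fun w hw =>
          Submodule.subset_span (hcont 0 (Submodule.zero_mem _) w hw)
      exact this (by rw [hfull₂]; trivial)
    have hxy := Submodule.add_mem _ (Submodule.mem_comap.mp hx) (Submodule.mem_comap.mp hy)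
    simpa using hxy
  have hint : ∀ z ∈ glued B₁ B₂ L₁ L₂ γ, ∀ z' ∈ glued B₁ B₂ L₁ L₂ γ,
      ∃ n : ℤ, prodForm B₁ B₂ z z' = (n : ℚ) := by
    intro z hz z' hz'
    obtain ⟨a, ha⟩ := heven z hz
    obtain ⟨b, hb⟩ := heven z' hz'
    obtain ⟨c, hc⟩ := heven (z + z') (Submodule.add_mem _ hz hz')
    refine ⟨c - a - b, ?_⟩
    have hs : prodForm B₁ B₂ z' z = prodForm B₁ B₂ z z' := by
      rw [aux_prodForm, aux_prodForm, hsymm₁, hsymm₂]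
    rw [map_add, map_add, LinearMap.add_apply, LinearMap.add_apply, hs, ha, hb] at hc
    push_cast
    linarith
  refine ⟨hspan, ?_, heven, ?_, hcont⟩
  · have hfg : ((dualLat B₁ L₁).prod (dualLat B₂ L₂)).FG :=
      (aux_dual_fg B₁ hsymm₁ hnd₁ L₁ hfg₁ hfull₁).prod (aux_dual_fg B₂ hsymm₂ hnd₂ L₂ hfg₂ hfull₂)
    exact hfg.of_le fun z hz => ⟨hz.1, hz.2.1⟩
  · refine le_antisymm ?_ (aux_le_dual _ _ hint)
    rintro ⟨a, b⟩ ⟨-, hab⟩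
    have ha : a ∈ dualLat B₁ L₁ := by
      refine ⟨by rw [hfull₁]; trivial, fun v hv => ?_⟩
      obtain ⟨n, hn⟩ := hab _ (hcont v hv 0 (Submodule.zero_mem _))
      exact ⟨n, by simpa [aux_prodForm] using hn⟩
    have hb : b ∈ dualLat B₂ L₂ := by
      refine ⟨by rw [hfull₂]; trivial, fun w hw => ?_⟩
      obtain ⟨n, hn⟩ := hab _ (hcont 0 (Submodule.zero_mem _) w hw)
      exact ⟨n, by simpa [aux_prodForm] using hn⟩
    obtain ⟨b', hb', hbeq⟩ := aux_mk_surj B₂ L₂ (γ (discMk B₁ L₁ a ha))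
    have hab' : (a, b') ∈ glued B₁ B₂ L₁ L₂ γ := ⟨ha, hb', hbeq.symm⟩
    have hdiff : b' - b ∈ L₂ := by
      refine aux_double_dual B₂ hsymm₂ hnd₂ L₂ hfg₂ hfull₂ _ fun w hw => ?_
      obtain ⟨v, hv, hveq⟩ := aux_mk_surj B₁ L₁ (γ.symm (discMk B₂ L₂ w hw))
      have hvw : (v, w) ∈ glued B₁ B₂ L₁ L₂ γ :=
        ⟨hv, hw, by rw [hveq]; exact γ.apply_symm_apply _⟩
      obtain ⟨m, hm⟩ := hab _ hvw
      obtain ⟨k, hk⟩ := hint _ hab' _ hvw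
      rw [aux_prodForm] at hm hk
      refine ⟨k - m, ?_⟩
      rw [map_sub, LinearMap.sub_apply]
      push_cast
      rw [← hm, ← hk]
      ring
    exact ⟨ha, hb, by rw [← hbeq]; exact (aux_mk_eq B₂ L₂ _ _ _ _).mpr hdiff⟩

end
end

section
/- Let Sp(1) denote the multiplicative group of unit quaternions and let ω = (−1 + i + j + k)/2 ∈ Sp(1). The subgroup of Sp(1) × Sp(1) (with componentwise multiplication) generated by the five pairs (1,i), (1,j), (i,1), (j,1), (ω,ω) has order 192. -/
/-!
STATEMENT 17: Let Sp(1) be the multiplicative group of unit quaternions and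
ω = (−1 + i + j + k)/2 ∈ Sp(1).  The subgroup of Sp(1) × Sp(1) generated by the five
pairs (1,i), (1,j), (i,1), (j,1), (ω,ω) has order 192.
-/

open Quaternion

noncomputable section

/-- The group `Sp(1) = {q ∈ ℍ : |q| = 1}` of unit quaternions, as a subgroup of the
group of units of ℍ. -/
def Sp1 : Subgroup ℍ[ℝ]ˣ where
  carrier := {q | ‖(q : ℍ[ℝ])‖ = 1}
  one_mem' := by simp
  mul_mem' := by
    intro a b ha hb
    show ‖((a * b : ℍ[ℝ]ˣ) : ℍ[ℝ])‖ = 1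
    rw [Units.val_mul, norm_mul, ha, hb, one_mul]
  inv_mem' := by
    intro a ha
    show ‖((a⁻¹ : ℍ[ℝ]ˣ) : ℍ[ℝ])‖ = 1
    rw [Units.val_inv_eq_inv_val, norm_inv, ha, inv_one]

/-- Build an element of `Sp(1)` from a quaternion of norm one. -/
def mkSp1 (x : ℍ[ℝ]) (hx : ‖x‖ = 1) : ↥Sp1 :=
  ⟨Units.mk0 x (by intro h; rw [h, norm_zero] at hx; exact zero_ne_one hx), hx⟩

def quatI : ℍ[ℝ] := ⟨0, 1, 0, 0⟩
def quatJ : ℍ[ℝ] := ⟨0, 0, 1, 0⟩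
/-- `ω = (−1 + i + j + k)/2`. -/
def quatOmega : ℍ[ℝ] := ⟨-(1/2), 1/2, 1/2, 1/2⟩

lemma norm_quatI : ‖quatI‖ = 1 := by
  show Real.sqrt (Quaternion.normSq _) = 1
  rw [Quaternion.normSq_def']
  show Real.sqrt (quatI.re ^ 2 + quatI.imI ^ 2 + quatI.imJ ^ 2 + quatI.imK ^ 2) = 1
  norm_num [quatI]

lemma norm_quatJ : ‖quatJ‖ = 1 := by
  show Real.sqrt (Quaternion.normSq _) = 1
  rw [Quaternion.normSq_def']
  show Real.sqrt (quatJ.re ^ 2 + quatJ.imI ^ 2 + quatJ.imJ ^ 2 + quatJ.imK ^ 2) = 1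
  norm_num [quatJ]

lemma norm_quatOmega : ‖quatOmega‖ = 1 := by
  show Real.sqrt (Quaternion.normSq _) = 1
  rw [Quaternion.normSq_def']
  show Real.sqrt (quatOmega.re ^ 2 + quatOmega.imI ^ 2 + quatOmega.imJ ^ 2 +
    quatOmega.imK ^ 2) = 1
  norm_num [quatOmega]

/-- The five generating pairs (1,i), (1,j), (i,1), (j,1), (ω,ω) in Sp(1) × Sp(1). -/
def gens : Set (↥Sp1 × ↥Sp1) :=
  {(1, mkSp1 quatI norm_quatI),
   (1, mkSp1 quatJ norm_quatJ),
   (mkSp1 quatI norm_quatI, 1),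
   (mkSp1 quatJ norm_quatJ, 1),
   (mkSp1 quatOmega norm_quatOmega, mkSp1 quatOmega norm_quatOmega)}

abbrev Z4 := ℤ × ℤ × ℤ × ℤ

/-- Integer quaternion multiplication. -/
def zmul (a b : Z4) : Z4 :=
  (a.1 * b.1 - a.2.1 * b.2.1 - a.2.2.1 * b.2.2.1 - a.2.2.2 * b.2.2.2,
   a.1 * b.2.1 + a.2.1 * b.1 + a.2.2.1 * b.2.2.2 - a.2.2.2 * b.2.2.1,
   a.1 * b.2.2.1 - a.2.1 * b.2.2.2 + a.2.2.1 * b.1 + a.2.2.2 * b.2.1,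
   a.1 * b.2.2.2 + a.2.1 * b.2.2.1 - a.2.2.1 * b.2.1 + a.2.2.2 * b.1)

def zpw (a : Z4) : ℕ → Z4
  | 0 => (1, 0, 0, 0)
  | n + 1 => zmul (zpw a n) a

def zw : Fin 3 → Z4 := ![(2, 0, 0, 0), (-1, 1, 1, 1), (-1, -1, -1, -1)]

/-- Twice the quaternion `i^r j^s ω^n`. -/
def zu (p : Fin 4 × Fin 2) (n : Fin 3) : Z4 :=
  zmul (zmul (zpw (0, 1, 0, 0) p.1) (zpw (0, 0, 1, 0) p.2)) (zw n)

def zc (a : Z4) : ℍ[ℝ] := ⟨a.1, a.2.1, a.2.2.1, a.2.2.2⟩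

@[simp] lemma zc_re (a : Z4) : (zc a).re = a.1 := rfl
@[simp] lemma zc_imI (a : Z4) : (zc a).imI = a.2.1 := rfl
@[simp] lemma zc_imJ (a : Z4) : (zc a).imJ = a.2.2.1 := rfl
@[simp] lemma zc_imK (a : Z4) : (zc a).imK = a.2.2.2 := rfl
@[simp] lemma om_re : quatOmega.re = -(1/2) := rfl
@[simp] lemma om_imI : quatOmega.imI = 1/2 := rfl
@[simp] lemma om_imJ : quatOmega.imJ = 1/2 := rfl
@[simp] lemma om_imK : quatOmega.imK = 1/2 := rfl

lemma zc_mul (a b : Z4) : zc (zmul a b) = zc a * zc b := by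
  ext <;> simp [zmul]

lemma zc_inj {a b : Z4} (h : zc a = zc b) : a = b := by
  obtain ⟨a1, a2, a3, a4⟩ := a
  obtain ⟨b1, b2, b3, b4⟩ := b
  have h1 := congrArg QuaternionAlgebra.re h
  have h2 := congrArg QuaternionAlgebra.imI h
  have h3 := congrArg QuaternionAlgebra.imJ h
  have h4 := congrArg QuaternionAlgebra.imK h
  simp only [zc, Int.cast_inj] at h1 h2 h3 h4
  simp [h1, h2, h3, h4]

lemma zc_pw (a : Z4) (n : ℕ) : zc (zpw a n) = zc a ^ n := by
  induction n with
  | zero => rw [pow_zero]; ext <;> simp [zpw]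
  | succ n ih => rw [zpw, zc_mul, ih, pow_succ]

lemma zc_two : zc (2, 0, 0, 0) = 2 := by
  have : (2 : ℍ[ℝ]) = 1 + 1 := by norm_num
  rw [this]
  ext <;> simp [zc] <;> norm_num

lemma zc_w (n : Fin 3) : zc (zw n) = 2 * quatOmega ^ (n : ℕ) := by
  have h2 : (2 : ℍ[ℝ]) = 1 + 1 := by norm_num
  fin_cases n
  · simp [zw, zc_two]
  · change zc (zw 1) = 2 * quatOmega ^ 1
    rw [h2, pow_one, add_mul, one_mul]
    ext <;> simp [zw] <;> norm_num
  · change zc (zw 2) = 2 * quatOmega ^ 2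
    rw [h2, pow_two, add_mul, one_mul]
    ext <;> simp [zw] <;> norm_num

abbrev sI := mkSp1 quatI norm_quatI
abbrev sJ := mkSp1 quatJ norm_quatJ
abbrev sW := mkSp1 quatOmega norm_quatOmega

def tS (p : Fin 4 × Fin 2) (n : Fin 3) : ↥Sp1 := sI ^ (p.1 : ℕ) * sJ ^ (p.2 : ℕ) * sW ^ (n : ℕ)

def sv (x : ↥Sp1) : ℍ[ℝ] := ((x : ℍ[ℝ]ˣ) : ℍ[ℝ])

lemma sv_inj {x y : ↥Sp1} (h : sv x = sv y) : x = y := Subtype.ext (Units.ext h)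

lemma sv_mul (x y : ↥Sp1) : sv (x * y) = sv x * sv y := rfl

lemma zc_u (p : Fin 4 × Fin 2) (n : Fin 3) : zc (zu p n) = 2 * sv (tS p n) := by
  have hI : zc (0, 1, 0, 0) = quatI := by ext <;> simp [zc, quatI]
  have hJ : zc (0, 0, 1, 0) = quatJ := by ext <;> simp [zc, quatJ]
  have h : sv (tS p n) = quatI ^ (p.1 : ℕ) * quatJ ^ (p.2 : ℕ) * quatOmega ^ (n : ℕ) := rfl
  rw [h, zu, zc_mul, zc_mul, zc_pw, zc_pw, zc_w, hI, hJ, two_mul, two_mul, mul_add]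

lemma two_ne : (2 : ℍ[ℝ]) ≠ 0 := by
  rw [← zc_two]
  intro h
  have := congrArg QuaternionAlgebra.re h
  simp [zc] at this

lemma tS_mul_of {p q r : Fin 4 × Fin 2} {n m l : Fin 3}
    (h : zmul (zu p n) (zu q m) = zmul (2, 0, 0, 0) (zu r l)) :
    tS p n * tS q m = tS r l := by
  apply sv_inj
  have := congrArg zc h
  rw [zc_mul, zc_mul, zc_u, zc_u, zc_u, zc_two] at this
  rw [sv_mul]
  apply mul_left_cancel₀ two_ne
  apply mul_left_cancel₀ two_ne
  rw [← this]
  have hc : sv (tS p n) * 2 = 2 * sv (tS p n) := by rw [mul_two, two_mul]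
  rw [mul_assoc, ← mul_assoc (sv (tS p n)), hc]
  simp only [mul_assoc]

lemma z_tab : ∀ p q : Fin 4 × Fin 2, ∀ n m : Fin 3, ∃ r : Fin 4 × Fin 2,
    zmul (zu p n) (zu q m) = zmul (2, 0, 0, 0) (zu r (n + m)) := by
  decide +kernel

lemma z_inv : ∀ p : Fin 4 × Fin 2, ∀ n : Fin 3, ∃ r : Fin 4 × Fin 2,
    zmul (zu p n) (zu r (-n)) = zmul (2, 0, 0, 0) (zu 0 0) := by
  decide +kernel

lemma z_inj : ∀ p q : Fin 4 × Fin 2, ∀ n m : Fin 3, zu p n = zu q m → p = q ∧ n = m := by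
  decide +kernel

lemma tS_inj {p q : Fin 4 × Fin 2} {n m : Fin 3} (h : tS p n = tS q m) : p = q ∧ n = m := by
  apply z_inj
  apply zc_inj
  rw [zc_u, zc_u, h]

def tF (x : (Fin 4 × Fin 2) × (Fin 4 × Fin 2) × Fin 3) : ↥Sp1 × ↥Sp1 :=
  (tS x.1 x.2.2, tS x.2.1 x.2.2)

lemma tF_inj : Function.Injective tF := by
  rintro ⟨p, q, n⟩ ⟨p', q', n'⟩ h
  obtain ⟨h1, h2⟩ := Prod.ext_iff.1 h
  obtain ⟨rfl, rfl⟩ := tS_inj h1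
  obtain ⟨rfl, -⟩ := tS_inj h2
  rfl

lemma tS_zero : tS 0 0 = 1 := by simp [tS]

def tG : Subgroup (↥Sp1 × ↥Sp1) where
  carrier := Set.range tF
  one_mem' := ⟨(0, 0, 0), by simp [tF, tS_zero]⟩
  mul_mem' := by
    rintro _ _ ⟨⟨p, q, n⟩, rfl⟩ ⟨⟨p', q', n'⟩, rfl⟩
    obtain ⟨r, hr⟩ := z_tab p p' n n'
    obtain ⟨s, hs⟩ := z_tab q q' n n'
    exact ⟨(r, s, n + n'), Prod.ext (tS_mul_of hr).symm (tS_mul_of hs).symm⟩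
  inv_mem' := by
    rintro _ ⟨⟨p, q, n⟩, rfl⟩
    obtain ⟨r, hr⟩ := z_inv p n
    obtain ⟨s, hs⟩ := z_inv q n
    have h1 := tS_mul_of hr
    have h2 := tS_mul_of hs
    rw [tS_zero] at h1 h2
    exact ⟨(r, s, -n), Prod.ext (inv_eq_of_mul_eq_one_right h1).symm
      (inv_eq_of_mul_eq_one_right h2).symm⟩

lemma closure_eq : Subgroup.closure gens = tG := by
  apply le_antisymm
  · rw [Subgroup.closure_le]
    rintro x (rfl | rfl | rfl | rfl | rfl)
    · exact ⟨((0, 0), (1, 0), 0), by simp [tF, tS]⟩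
    · exact ⟨((0, 0), (0, 1), 0), by simp [tF, tS]⟩
    · exact ⟨((1, 0), (0, 0), 0), by simp [tF, tS]⟩
    · exact ⟨((0, 1), (0, 0), 0), by simp [tF, tS]⟩
    · exact ⟨((0, 0), (0, 0), 1), by simp [tF, tS]⟩
  · rintro _ ⟨⟨⟨a, b⟩, ⟨c, d⟩, n⟩, rfl⟩
    have e : tF ((a, b), (c, d), n) = (sI, 1) ^ (a : ℕ) * (sJ, 1) ^ (b : ℕ) *
        ((1, sI) ^ (c : ℕ) * (1, sJ) ^ (d : ℕ)) * (sW, sW) ^ (n : ℕ) := by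
      simp [tF, tS]
    rw [e]
    have g : ∀ x ∈ gens, ∀ k : ℕ, x ^ k ∈ Subgroup.closure gens :=
      fun x hx k => pow_mem (Subgroup.subset_closure hx) k
    refine mul_mem (mul_mem (mul_mem (g _ ?_ _) (g _ ?_ _)) (mul_mem (g _ ?_ _) (g _ ?_ _)))
      (g _ ?_ _) <;> simp [gens]

theorem statement17 : Nat.card ↥(Subgroup.closure gens) = 192 := by
  rw [closure_eq]
  have h : Nat.card (Set.range tF) = 192 := by
    rw [Nat.card_range_of_injective tF_inj]
    simp
  exact h

end
end

section
/- Let ζ = e^{2πi/5} ∈ ℂ. Then (1/5) · Σ_{i=0}^{4} Σ_{j=0}^{4} (1 − ζ^{d(i,j)})(1 − ζ^{−d(i,j)})(1 − ζ^{2·d(i,j)})(1 − ζ^{−2·d(i,j)}) = 24, where d(i,j) = gcd(gcd(i,j), 5) (so that d(0,0) = 5 and the corresponding term vanishes). -/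
/-!
STATEMENT 18: Let ζ = e^{2πi/5}.  Then
(1/5) Σ_{i=0}^{4} Σ_{j=0}^{4} (1−ζ^{d})(1−ζ^{−d})(1−ζ^{2d})(1−ζ^{−2d}) = 24,
where d = d(i,j) = gcd(gcd(i,j),5).  (This computes the Witten index of the orbifold
of a T⁴ sigma model by an order-5 symmetry in class 5A, giving the Euler number 24 of
a K3 model.)
-/

open Complex

noncomputable def zeta5 : ℂ := Complex.exp (2 * Real.pi * Complex.I / 5)

theorem zeta5_prim : IsPrimitiveRoot zeta5 5 := by
  have h := Complex.isPrimitiveRoot_exp 5 (by norm_num)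
  simpa [zeta5] using h

theorem zeta5_term :
    (1 - zeta5) * (1 - zeta5⁻¹) * (1 - zeta5 ^ 2) * (1 - (zeta5 ^ 2)⁻¹) = 5 := by
  have h5 : zeta5 ^ 5 = 1 := zeta5_prim.pow_eq_one
  have hs := zeta5_prim.geom_sum_eq_zero (by norm_num)
  simp only [Finset.sum_range_succ, Finset.sum_range_zero] at hs
  have h1 : zeta5⁻¹ = zeta5 ^ 4 := inv_eq_of_mul_eq_one_right (by rw [← h5]; ring)
  have h2 : (zeta5 ^ 2)⁻¹ = zeta5 ^ 3 := inv_eq_of_mul_eq_one_right (by rw [← h5]; ring)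
  rw [h1, h2]
  grind

theorem statement18 :
    (1 / 5 : ℂ) * ∑ i ∈ Finset.range 5, ∑ j ∈ Finset.range 5,
      (1 - zeta5 ^ Nat.gcd (Nat.gcd i j) 5) * (1 - (zeta5 ^ Nat.gcd (Nat.gcd i j) 5)⁻¹) *
      (1 - zeta5 ^ (2 * Nat.gcd (Nat.gcd i j) 5)) *
      (1 - (zeta5 ^ (2 * Nat.gcd (Nat.gcd i j) 5))⁻¹) = 24 := by
  have h5 : zeta5 ^ 5 = 1 := zeta5_prim.pow_eq_one
  have ht := zeta5_term
  simp only [Finset.sum_range_succ, Finset.sum_range_zero]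
  norm_num [h5, ht]
end
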